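/- Let Σ be a connected unbalanced signed graph and v a vertex of Σ. Then v is a balancing vertex (i.e. Σ ∖ v is balanced, equivalently v lies in every negative circle) if and only if Σ can be switched so that every edge not incident with v is positive and v is incident with at least one positive and at least one negative edge. -/

import Mathlib

/-- The sign of a walk in a signed graph: the product of the signs of its edges. -/
def walkSign {V : Type*} (G : SimpleGraph V) (σ : Sym2 V → ℤˣ) {u v : V}
    (w : G.Walk u v) : ℤˣ :=
  (w.edges.map σ).prod

/-- A signed graph is balanced if every circle (cycle) is positive. -/
def sgBalanced {V : Type*} (G : SimpleGraph V) (σ : Sym2 V → ℤˣ) : Prop :=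
  ∀ ⦃v : V⦄ (w : G.Walk v v), w.IsCycle → walkSign G σ w = 1

/-- The signature obtained from `σ` by switching with `ζ : V → ℤˣ`:
`σ^ζ(uv) = ζ(u) σ(uv) ζ(v)`. -/
def sgSwitch {V : Type*} (σ : Sym2 V → ℤˣ) (ζ : V → ℤˣ) (e : Sym2 V) : ℤˣ :=
  Sym2.lift ⟨fun u v => ζ u * ζ v, fun u v => mul_comm (ζ u) (ζ v)⟩ e * σ e

theorem sg_cons {V : Type*} (G : SimpleGraph V) (σ : Sym2 V → ℤˣ) {u v x : V}
    (h : G.Adj u v) (w : G.Walk v x) :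
    walkSign G σ (SimpleGraph.Walk.cons h w) = σ s(u, v) * walkSign G σ w := by
  simp [walkSign]

theorem sg_append {V : Type*} (G : SimpleGraph V) (σ : Sym2 V → ℤˣ) {u v x : V}
    (p : G.Walk u v) (w : G.Walk v x) :
    walkSign G σ (p.append w) = walkSign G σ p * walkSign G σ w := by
  simp [walkSign, SimpleGraph.Walk.edges_append]

theorem sg_reverse {V : Type*} (G : SimpleGraph V) (σ : Sym2 V → ℤˣ) {u v : V}
    (p : G.Walk u v) : walkSign G σ p.reverse = walkSign G σ p := by
  simp [walkSign, SimpleGraph.Walk.edges_reverse, List.prod_reverse]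

theorem sg_switch_walk {V : Type*} (G : SimpleGraph V) (σ : Sym2 V → ℤˣ) (ζ : V → ℤˣ) {u v : V}
    (p : G.Walk u v) : walkSign G (sgSwitch σ ζ) p = ζ u * ζ v * walkSign G σ p := by
  induction p with
  | nil => simp [walkSign]
  | @cons u v x h p ih =>
    rw [sg_cons, sg_cons, ih]
    simp only [sgSwitch, Sym2.lift_mk]
    calc _ = (ζ v * ζ v) * (ζ u * ζ x * (σ s(u, v) * walkSign G σ p)) := by
            simp only [mul_assoc, mul_comm, mul_left_comm]
      _ = _ := by rw [Int.units_mul_self, one_mul]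

theorem sg_path_edge {V : Type*} (G : SimpleGraph V) (σ : Sym2 V → ℤˣ) {u v : V}
    (p : G.Walk v u) (hp : p.IsPath) (he : s(u, v) ∈ p.edges) :
    walkSign G σ p = σ s(u, v) := by
  cases p with
  | nil => simp at he
  | @cons _ x _ h q =>
    rw [SimpleGraph.Walk.cons_isPath_iff] at hp
    rw [SimpleGraph.Walk.edges_cons, List.mem_cons] at he
    rcases he with he | he
    · have hx : u = x := by
        rw [Sym2.eq_swap, Sym2.congr_right] at he
        exact he
      subst hx
      have := (SimpleGraph.Walk.isPath_iff_nil.1 hp.1).eq_nil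
      subst this
      rw [sg_cons, Sym2.eq_swap]
      simp [walkSign]
    · exact absurd (SimpleGraph.Walk.snd_mem_support_of_mem_edges q he) hp.2

theorem sg_close {V : Type*} (G : SimpleGraph V) (σ : Sym2 V → ℤˣ) (hb : sgBalanced G σ)
    {u v : V} (h : G.Adj u v) (p : G.Walk v u) (hp : p.IsPath) :
    σ s(u, v) * walkSign G σ p = 1 := by
  by_cases he : s(u, v) ∈ p.edges
  · rw [sg_path_edge G σ p hp he, Int.units_mul_self]
  · rw [← sg_cons G σ h p]
    exact hb _ ((SimpleGraph.Walk.cons_isCycle_iff p h).2 ⟨hp, he⟩)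

open Classical in
theorem sg_bypass {V : Type*} (G : SimpleGraph V) (σ : Sym2 V → ℤˣ) (hb : sgBalanced G σ)
    {u v : V} (p : G.Walk u v) : walkSign G σ p.bypass = walkSign G σ p := by
  induction p with
  | nil => rfl
  | @cons u v x h p ih =>
    rw [sg_cons, ← ih, SimpleGraph.Walk.bypass]
    split_ifs with hs
    · have h1 := sg_close G σ hb h _ (p.bypass_isPath.takeUntil hs)
      conv_rhs => rw [← SimpleGraph.Walk.take_spec p.bypass hs]
      rw [sg_append, ← mul_assoc, h1, one_mul]
    · rw [sg_cons]

theorem sg_closed {V : Type*} (G : SimpleGraph V) (σ : Sym2 V → ℤˣ) (hb : sgBalanced G σ)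
    {u : V} (p : G.Walk u u) : walkSign G σ p = 1 := by
  classical
  rw [← sg_bypass G σ hb p, (SimpleGraph.Walk.isPath_iff_nil.1 p.bypass_isPath).eq_nil]
  simp [walkSign]

theorem sg_harary {V : Type*} (G : SimpleGraph V) (σ : Sym2 V → ℤˣ) (hb : sgBalanced G σ) :
    ∃ ζ : V → ℤˣ, ∀ e ∈ G.edgeSet, sgSwitch σ ζ e = 1 := by
  have hr : ∀ x : V, G.Reachable (G.connectedComponentMk x).out x := fun x =>
    SimpleGraph.ConnectedComponent.exact (Quot.out_eq _)
  let r : V → V := fun x => (G.connectedComponentMk x).out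
  let W : ∀ x : V, G.Walk (r x) x := fun x => (hr x).some
  refine ⟨fun x => walkSign G σ (W x), fun e => ?_⟩
  induction e using Sym2.ind with
  | _ x y =>
    intro hxy
    have hxy' : G.Adj x y := hxy
    have hc : r y = r x := by
      show (G.connectedComponentMk y).out = (G.connectedComponentMk x).out
      rw [SimpleGraph.ConnectedComponent.sound hxy'.symm.reachable]
    have key : ∀ (a b : V) (p : G.Walk a x) (q : G.Walk b y), b = a →
        walkSign G σ p * walkSign G σ q * σ s(x, y) = 1 := by
      intro a b p q hab
      subst hab
      have := sg_closed G σ hb (p.append (SimpleGraph.Walk.cons hxy' q.reverse))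
      rw [sg_append, sg_cons, sg_reverse] at this
      rw [← this, mul_assoc, mul_comm (walkSign G σ q)]
    exact key _ _ (W x) (W y) hc

theorem sg_balanced_of_switch {V : Type*} (G : SimpleGraph V) (σ : Sym2 V → ℤˣ) (ζ : V → ℤˣ)
    {a : V} (w : G.Walk a a) (h : ∀ e ∈ w.edges, sgSwitch σ ζ e = 1) :
    walkSign G σ w = 1 := by
  have h1 := sg_switch_walk G σ ζ w
  rw [Int.units_mul_self, one_mul] at h1
  rw [← h1, walkSign]
  apply List.prod_eq_one
  intro x hx
  obtain ⟨e, he, rfl⟩ := List.mem_map.1 hx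
  exact h e he

/-- In a connected unbalanced signed graph, a vertex `v` is a balancing vertex (it lies in
every negative circle, i.e. deleting it leaves a balanced graph) iff the graph can be
switched so that every edge not incident with `v` is positive while `v` is incident with
at least one positive and at least one negative edge. -/
theorem balancing_vertex_iff_switching {V : Type*} [Fintype V]
    (G : SimpleGraph V) (σ : Sym2 V → ℤˣ)
    (hconn : G.Connected) (hunbal : ¬ sgBalanced G σ) (v : V) :
    (∀ ⦃a : V⦄ (w : G.Walk a a), w.IsCycle → v ∉ w.support → walkSign G σ w = 1) ↔
      ∃ ζ : V → ℤˣ,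
        (∀ e ∈ G.edgeSet, v ∉ e → sgSwitch σ ζ e = 1) ∧
        (∃ a : V, G.Adj v a ∧ sgSwitch σ ζ s(v, a) = 1) ∧
        (∃ b : V, G.Adj v b ∧ sgSwitch σ ζ s(v, b) = -1) := by
  classical
  constructor
  · intro hcyc
    let H : SimpleGraph V := G.deleteEdges {e | v ∈ e}
    have hle : H ≤ G := SimpleGraph.deleteEdges_le _
    have hH : sgBalanced H σ := by
      intro a w hw
      have h1 := hcyc (w.mapLe hle) (hw.mapLe hle) (by
        intro hv
        have hv' : v ∈ w.support := by simpa using hv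
        obtain ⟨e, he, hve⟩ :=
          (SimpleGraph.Walk.mem_support_iff_exists_mem_edges_of_not_nil hw.not_nil).1 hv'
        have := w.edges_subset_edgeSet he
        rw [SimpleGraph.edgeSet_deleteEdges] at this
        exact this.2 hve)
      simpa [walkSign] using h1
    obtain ⟨ζ, hζ⟩ := sg_harary H σ hH
    have hζ' : ∀ e ∈ G.edgeSet, v ∉ e → sgSwitch σ ζ e = 1 := by
      intro e he hv
      apply hζ
      rw [SimpleGraph.edgeSet_deleteEdges]
      exact ⟨he, hv⟩
    refine ⟨ζ, hζ', ?_, ?_⟩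
    · by_contra! hno
      apply hunbal
      intro a w _
      apply sg_balanced_of_switch G σ (Function.update ζ v (-ζ v)) w
      intro e he
      have heG := w.edges_subset_edgeSet he
      by_cases hv : v ∈ e
      · obtain ⟨b, rfl⟩ := hv
        have hb : G.Adj v b := heG
        have h2 := (Int.units_eq_one_or _).resolve_left (hno b hb)
        have h3 : b ≠ v := hb.ne'
        simp only [sgSwitch, Sym2.lift_mk] at h2 ⊢
        rw [Function.update_self, Function.update_of_ne h3, neg_mul, neg_mul, h2, neg_neg]
      · have h2 := hζ' e heG hv
        induction e using Sym2.ind with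
        | _ x y =>
          simp only [Sym2.mem_iff, not_or] at hv
          simp only [sgSwitch, Sym2.lift_mk] at h2 ⊢
          rw [Function.update_of_ne (Ne.symm hv.1), Function.update_of_ne (Ne.symm hv.2), h2]
    · by_contra! hno
      apply hunbal
      intro a w _
      apply sg_balanced_of_switch G σ ζ w
      intro e he
      have heG := w.edges_subset_edgeSet he
      by_cases hv : v ∈ e
      · obtain ⟨b, rfl⟩ := hv
        exact (Int.units_eq_one_or _).resolve_right (hno b heG)
      · exact hζ' e heG hv
  · rintro ⟨ζ, hζ, -, -⟩ a w _ hv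
    apply sg_balanced_of_switch G σ ζ w
    intro e he
    exact hζ e (w.edges_subset_edgeSet he) fun hve =>
      hv (SimpleGraph.Walk.mem_support_of_mem_edges he hve)
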